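/- (Theorem 1.) Consider N users; user n has a nonempty finite index set Pₙ of ground-truth critical events, each event k ∈ Pₙ having a confidence-score sequence Cₙ k : Fin L → ℝ, with utility Uₙ(αl, αu) = |{k ∈ Pₙ : k is predicted critical under (αl, αu)}| / |Pₙ|, and a weight ρₙ > 0. Let threshold vectors satisfy αlₙ ≤ αl'ₙ and αuₙ ≤ αu'ₙ for every n, and suppose Uₙ(αl'ₙ, αu'ₙ) > 0 for every n. Then the weighted log-utility objective is monotonically decreasing in the thresholds: ∑ₙ ρₙ · ln(Uₙ(αl'ₙ, αu'ₙ)) ≤ ∑ₙ ρₙ · ln(Uₙ(αlₙ, αuₙ)). -/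

import Mathlib

open Classical

/-- An event with confidence scores `C` is predicted critical under thresholds `(αl, αu)`
if some layer `q` has `C q ≥ αu` while all earlier layers have scores strictly between
the thresholds. -/
def PredCritical {L : ℕ} (C : Fin L → ℝ) (αl αu : ℝ) : Prop :=
  ∃ q : Fin L, αu ≤ C q ∧ ∀ t : Fin L, t < q → αl < C t ∧ C t < αu

/-- The utility (true positive rate) of a finite family of ground-truth critical events. -/
noncomputable def Utility {L : ℕ} {ι : Type*} (P : Finset ι) (C : ι → Fin L → ℝ)
    (αl αu : ℝ) : ℝ :=
  ((P.filter (fun k => PredCritical (C k) αl αu)).card : ℝ) / (P.card : ℝ)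

/-- Lowering `αu` can break `C t < αu` at a layer before the exit `q`, so the definition is not
visibly antitone in `αu`. Dropping that clause loses nothing: one may exit instead at the first
layer whose score reaches `αu`. -/
theorem predCritical_iff_exists_forall_lt {L : ℕ} {C : Fin L → ℝ} {αl αu : ℝ} :
    PredCritical C αl αu ↔ ∃ q, αu ≤ C q ∧ ∀ t < q, αl < C t := by
  constructor
  · rintro ⟨q, hq, hlt⟩
    exact ⟨q, hq, fun t ht => (hlt t ht).1⟩
  · rintro ⟨q, hq, hlt⟩
    obtain ⟨m, hmq, hm⟩ := exists_minimal_le_of_wellFoundedLT (fun t => αu ≤ C t) q hq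
    exact ⟨m, hm.prop, fun t ht =>
      ⟨hlt t (ht.trans_le hmq), not_le.mp (hm.not_prop_of_lt ht)⟩⟩

theorem PredCritical.anti {L : ℕ} {C : Fin L → ℝ} {αl αl' αu αu' : ℝ}
    (hl : αl ≤ αl') (hu : αu ≤ αu') (h : PredCritical C αl' αu') : PredCritical C αl αu := by
  rw [predCritical_iff_exists_forall_lt] at h ⊢
  obtain ⟨q, hq, hlt⟩ := h
  exact ⟨q, hu.trans hq, fun t ht => hl.trans_lt (hlt t ht)⟩

theorem utility_anti {L : ℕ} {ι : Type*} (P : Finset ι) (C : ι → Fin L → ℝ)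
    {αl αl' αu αu' : ℝ} (hl : αl ≤ αl') (hu : αu ≤ αu') :
    Utility P C αl' αu' ≤ Utility P C αl αu := by
  have hsub : P.filter (fun k => PredCritical (C k) αl' αu') ⊆
      P.filter (fun k => PredCritical (C k) αl αu) :=
    Finset.monotone_filter_right P fun _ _ h => h.anti hl hu
  unfold Utility
  gcongr

/-- Theorem 1: the weighted log-utility objective is monotonically decreasing with
respect to the dual thresholds. -/
theorem weighted_log_utility_decreasing {L N : ℕ} {ι : Type*}
    (P : Fin N → Finset ι) (hP : ∀ n, (P n).Nonempty)
    (C : Fin N → ι → Fin L → ℝ)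
    (ρ : Fin N → ℝ) (hρ : ∀ n, 0 < ρ n)
    (αl αl' αu αu' : Fin N → ℝ)
    (hl : ∀ n, αl n ≤ αl' n) (hu : ∀ n, αu n ≤ αu' n)
    (hpos : ∀ n, 0 < Utility (P n) (C n) (αl' n) (αu' n)) :
    ∑ n, ρ n * Real.log (Utility (P n) (C n) (αl' n) (αu' n)) ≤
      ∑ n, ρ n * Real.log (Utility (P n) (C n) (αl n) (αu n)) := by
  refine Finset.sum_le_sum fun n _ => mul_le_mul_of_nonneg_left ?_ (hρ n).le
  exact Real.log_le_log (hpos n) (utility_anti (P n) (C n) (hl n) (hu n))
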